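/- Let p, q, r be real numbers with p, q, r ≥ 2 and 1/p + 1/q + 1/r < 1, let λ = λ(p,q,r), and let A, B be the associated SL(2,ℝ) matrices. Then the element C = B⁻¹A⁻¹ has trace tr(C) = 2cos(π/p)·cos(π/q) − (λ + λ⁻¹)·sin(π/p)·sin(π/q) = −2cos(π/r). -/

import Mathlib

open Real Matrix

/-- `E(p,q,r) = cos(π/r) + cos(π/p)·cos(π/q)`. -/
noncomputable def triE (p q r : ℝ) : ℝ :=
  Real.cos (π / r) + Real.cos (π / p) * Real.cos (π / q)

/-- `λ(p,q,r) = (E + √(E² − sin²(π/p)·sin²(π/q)))/(sin(π/p)·sin(π/q))`. -/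
noncomputable def triLambda (p q r : ℝ) : ℝ :=
  (triE p q r +
      Real.sqrt ((triE p q r) ^ 2 - (Real.sin (π / p)) ^ 2 * (Real.sin (π / q)) ^ 2)) /
    (Real.sin (π / p) * Real.sin (π / q))

/-- The matrix `A` associated to the `(p,q,r)`-triangle group. -/
noncomputable def triA (p : ℝ) : Matrix (Fin 2) (Fin 2) ℝ :=
  !![Real.cos (π / p), -Real.sin (π / p); Real.sin (π / p), Real.cos (π / p)]

/-- The matrix `B` associated to the `(p,q,r)`-triangle group. -/
noncomputable def triB (q lam : ℝ) : Matrix (Fin 2) (Fin 2) ℝ :=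
  !![Real.cos (π / q), -lam⁻¹ * Real.sin (π / q); lam * Real.sin (π / q), Real.cos (π / q)]

theorem stmt_3 (p q r : ℝ) (hp : 2 ≤ p) (hq : 2 ≤ q) (hr : 2 ≤ r)
    (h : 1 / p + 1 / q + 1 / r < 1) :
    ((triB q (triLambda p q r))⁻¹ * (triA p)⁻¹).trace =
        2 * Real.cos (π / p) * Real.cos (π / q) -
          (triLambda p q r + (triLambda p q r)⁻¹) * (Real.sin (π / p) * Real.sin (π / q)) ∧
      ((triB q (triLambda p q r))⁻¹ * (triA p)⁻¹).trace = -2 * Real.cos (π / r) := by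
  have ha0 : 0 < π / p := by positivity
  have hb0 : 0 < π / q := by positivity
  have hc0 : 0 < π / r := by positivity
  have hpi := Real.pi_pos
  have hap : π / p < π := div_lt_self hpi (by linarith)
  have hbp : π / q < π := div_lt_self hpi (by linarith)
  have habc : π / p + π / q + π / r < π := by
    have h1 : π * (1 / p + 1 / q + 1 / r) < π * 1 := mul_lt_mul_of_pos_left h hpi
    have h2 : π * (1 / p + 1 / q + 1 / r) = π / p + π / q + π / r := by ring
    linarith
  have hsa := Real.sin_pos_of_pos_of_lt_pi ha0 hap
  have hsb := Real.sin_pos_of_pos_of_lt_pi hb0 hbp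
  have hE : Real.sin (π / p) * Real.sin (π / q) < triE p q r := by
    have h1 : Real.cos (π - (π / p + π / q)) < Real.cos (π / r) :=
      Real.cos_lt_cos_of_nonneg_of_le_pi hc0.le (by linarith) (by linarith)
    rw [Real.cos_pi_sub, Real.cos_add] at h1
    unfold triE
    linarith
  have hss := mul_pos hsa hsb
  have hD : 0 ≤ (triE p q r) ^ 2 - (Real.sin (π / p)) ^ 2 * (Real.sin (π / q)) ^ 2 := by
    nlinarith
  have hsq := Real.sq_sqrt hD
  have hs0 := Real.sqrt_nonneg ((triE p q r) ^ 2 - (Real.sin (π / p)) ^ 2 * (Real.sin (π / q)) ^ 2)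
  have hlam : triLambda p q r * (Real.sin (π / p) * Real.sin (π / q)) = triE p q r +
      Real.sqrt ((triE p q r) ^ 2 - (Real.sin (π / p)) ^ 2 * (Real.sin (π / q)) ^ 2) := by
    unfold triLambda
    exact div_mul_cancel₀ _ hss.ne'
  have hinv : (triLambda p q r)⁻¹ * (Real.sin (π / p) * Real.sin (π / q)) = triE p q r -
      Real.sqrt ((triE p q r) ^ 2 - (Real.sin (π / p)) ^ 2 * (Real.sin (π / q)) ^ 2) := by
    unfold triLambda
    rw [inv_div, div_mul_eq_mul_div, div_eq_iff (by linarith)]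
    linear_combination hsq
  have hl : triLambda p q r ≠ 0 := by
    intro h0
    rw [h0] at hlam
    linarith
  have hA : (triA p).det = 1 := by
    simp only [triA, Matrix.det_fin_two_of]
    linear_combination Real.sin_sq_add_cos_sq (π / p)
  have hB : (triB q (triLambda p q r)).det = 1 := by
    simp only [triB, Matrix.det_fin_two_of]
    linear_combination Real.sin_sq_add_cos_sq (π / q) +
      Real.sin (π / q) ^ 2 * inv_mul_cancel₀ hl
  have key : ((triB q (triLambda p q r))⁻¹ * (triA p)⁻¹).trace =
        2 * Real.cos (π / p) * Real.cos (π / q) -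
          (triLambda p q r + (triLambda p q r)⁻¹) * (Real.sin (π / p) * Real.sin (π / q)) := by
    rw [Matrix.inv_def, Matrix.inv_def, hA, hB]
    simp only [triA, triB, Matrix.adjugate_fin_two_of, Ring.inverse_one, one_smul,
      Matrix.mul_fin_two, Matrix.trace_fin_two_of]
    ring
  refine ⟨key, key.trans ?_⟩
  rw [add_mul, hlam, hinv]
  unfold triE
  ring
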